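/- Let $f_{rel} > 0$, $S > 0$, let $c$ be the unique positive root of $7t^3 + 21t^2 - 3t - 1 = 0$, let $D > 0$ with $D f_{rel} \geq \frac{1+c}{c} S$, and define $E_1(X) = (S - X) f_{rel}^2 + 2X \left( \frac{2X}{D f_{rel} - S + X} f_{rel} \right)^2$ for $X \in [0, S]$. Then $E_1$ attains its minimum over $[0, S]$ at $X = S$. That is, when the deadline satisfies $D \geq \frac{1+c}{c} \cdot \frac{S}{f_{rel}}$, re-executing all tasks is optimal for a linear chain on one processor. -/

import Mathlib

/-!
Put `a = D f_rel - S` and `t = X / a`. Then `E₁'(X)` has the sign of `8 t² (t + 3) - (1 + t)³`,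
which is the cubic `7 t³ + 21 t² - 3 t - 1`. Being convex on `[0, ∞)` and negative at `0`, it is
nonpositive on `[0, c]`, so `E₁` decreases on `[0, c a]`; the deadline condition says `S ≤ c a`.
-/

open Set

/-- The energy `E₁(X)` of a linear chain of total weight `S` whose re-executed tasks have total
weight `X`. The deadline `D` enters only through the slack `a = D * frel - S`, the work that still
fits at speed `frel` after every task has been executed once. -/
noncomputable def chainEnergy (frel S a X : ℝ) : ℝ :=
  (S - X) * frel ^ 2 + 2 * X * (2 * X / (a + X) * frel) ^ 2

/-- The cubic whose positive root is the critical ratio of re-executed weight to slack. -/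
def criticalCubic (t : ℝ) : ℝ :=
  7 * t ^ 3 + 21 * t ^ 2 - 3 * t - 1

theorem convexOn_criticalCubic : ConvexOn ℝ (Ici 0) criticalCubic := by
  have cubic : ConvexOn ℝ (Ici 0) fun t : ℝ ↦ 7 * t ^ 3 :=
    (convexOn_pow 3).smul (by norm_num)
  have quadratic : ConvexOn ℝ (Ici 0) fun t : ℝ ↦ 21 * t ^ 2 :=
    (convexOn_pow 2).smul (by norm_num)
  have linear : ConcaveOn ℝ (Ici 0) fun t : ℝ ↦ 3 * t :=
    (concaveOn_id (convex_Ici 0)).smul (by norm_num)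
  exact ((cubic.add quadratic).sub linear).sub (concaveOn_const 1 (convex_Ici 0))

theorem criticalCubic_nonpos_of_le {t c : ℝ} (ht : 0 ≤ t) (htc : t ≤ c)
    (hc : criticalCubic c ≤ 0) : criticalCubic t ≤ 0 := by
  have h_zero : criticalCubic 0 ≤ 0 := by norm_num [criticalCubic]
  have h_segment : t ∈ segment ℝ 0 c := by
    rw [segment_eq_Icc (ht.trans htc)]
    exact ⟨ht, htc⟩
  exact (convexOn_criticalCubic.le_on_segment self_mem_Ici (ht.trans htc) h_segment).trans
    (max_le h_zero hc)

theorem hasDerivAt_chainEnergy (frel S : ℝ) {a X : ℝ} (hX : a + X ≠ 0) :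
    HasDerivAt (chainEnergy frel S a)
      (frel ^ 2 * ((8 * X ^ 2 * (X + 3 * a) - (a + X) ^ 3) / (a + X) ^ 3)) X := by
  have h_once : HasDerivAt (fun x ↦ (S - x) * frel ^ 2) (-1 * frel ^ 2) X :=
    ((hasDerivAt_id X).const_sub S).mul_const _
  have h_double : HasDerivAt (fun x ↦ 2 * x) 2 X := hasDerivAt_const_mul 2
  have h_speed : HasDerivAt (fun x ↦ 2 * x / (a + x) * frel)
      ((2 * (a + X) - 2 * X * 1) / (a + X) ^ 2 * frel) X :=
    (h_double.div ((hasDerivAt_id X).const_add a) hX).mul_const frel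
  refine (h_once.add (h_double.mul (h_speed.fun_pow 2))).congr_deriv ?_
  simp only [Nat.cast_ofNat, Nat.add_one_sub_one, pow_one]
  field_simp
  ring

theorem deriv_chainEnergy (frel S : ℝ) {a X : ℝ} (ha : a ≠ 0) (hX : a + X ≠ 0) :
    deriv (chainEnergy frel S a) X =
      frel ^ 2 * (a ^ 3 * criticalCubic (X / a) / (a + X) ^ 3) := by
  have h_numerator :
      8 * X ^ 2 * (X + 3 * a) - (a + X) ^ 3 = a ^ 3 * criticalCubic (X / a) := by
    unfold criticalCubic
    field_simp
    ring
  rw [(hasDerivAt_chainEnergy frel S hX).deriv, h_numerator]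

theorem antitoneOn_chainEnergy (frel S : ℝ) {a c : ℝ} (ha : 0 < a) (hc : criticalCubic c ≤ 0) :
    AntitoneOn (chainEnergy frel S a) (Icc 0 (c * a)) := by
  have h_ne {X : ℝ} (hX : X ∈ Icc 0 (c * a)) : a + X ≠ 0 := (add_pos_of_pos_of_nonneg ha hX.1).ne'
  have h_diff {X : ℝ} (hX : X ∈ Icc 0 (c * a)) : DifferentiableAt ℝ (chainEnergy frel S a) X :=
    (hasDerivAt_chainEnergy frel S (h_ne hX)).differentiableAt
  refine antitoneOn_of_deriv_nonpos (convex_Icc 0 (c * a))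
    (fun X hX ↦ (h_diff hX).continuousAt.continuousWithinAt)
    (fun X hX ↦ (h_diff (interior_subset hX)).differentiableWithinAt) fun X hX ↦ ?_
  replace hX := interior_subset hX
  have h_cubic : criticalCubic (X / a) ≤ 0 :=
    criticalCubic_nonpos_of_le (div_nonneg hX.1 ha.le) ((div_le_iff₀ ha).2 hX.2) hc
  rw [deriv_chainEnergy frel S ha.ne' (h_ne hX)]
  exact mul_nonpos_of_nonneg_of_nonpos (sq_nonneg frel) <| div_nonpos_of_nonpos_of_nonneg
    (mul_nonpos_of_nonneg_of_nonpos (pow_nonneg ha.le 3) h_cubic)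
    (pow_nonneg (add_nonneg ha.le hX.1) 3)

theorem one_add_div_mul_le_iff {c S W : ℝ} (hc : 0 < c) :
    (1 + c) / c * S ≤ W ↔ S ≤ c * (W - S) := by
  rw [div_mul_eq_mul_div, div_le_iff₀ hc]
  constructor <;> intro h <;> linarith

/-- When `D f_rel ≥ (1+c)/c · S`, re-executing all tasks is optimal: `E1`
attains its minimum over `[0, S]` at `X = S`. -/
theorem E1_min_at_S
    (frel S D c : ℝ) (hfrel : 0 < frel) (hS : 0 < S) (hD : 0 < D)
    (hc : 0 < c) (hcroot : 7 * c ^ 3 + 21 * c ^ 2 - 3 * c - 1 = 0)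
    (hcuniq : ∀ t : ℝ, 0 < t → 7 * t ^ 3 + 21 * t ^ 2 - 3 * t - 1 = 0 → t = c)
    (hDS : (1 + c) / c * S ≤ D * frel)
    (E1 : ℝ → ℝ)
    (hE1 : ∀ X, E1 X =
      (S - X) * frel ^ 2 + 2 * X * (2 * X / (D * frel - S + X) * frel) ^ 2) :
    ∀ X : ℝ, 0 ≤ X → X ≤ S → E1 S ≤ E1 X := by
  intro X hX hXS
  have h_energy : E1 = chainEnergy frel S (D * frel - S) := funext hE1
  have h_le : S ≤ c * (D * frel - S) := (one_add_div_mul_le_iff hc).1 hDS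
  have h_slack : 0 < D * frel - S := pos_of_mul_pos_right (hS.trans_le h_le) hc.le
  rw [h_energy]
  exact antitoneOn_chainEnergy frel S h_slack hcroot.le ⟨hX, hXS.trans h_le⟩ ⟨hS.le, h_le⟩ hXS
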